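/- (Oscillating ratio of Beukers–Forsgård evaluations.) Let z₀ := (√3 + 2)/(3√3) and z₁ := (√3 − 2)/(3√3). For every real a such that 4/3 − a is not zero or a negative integer, one has ₂F₁(a, 1 − 2a; 4/3 − a; z₀) = 4^a · (cos(π/12))^{2a−1} · cos((π/2)·(a + 1/6)) · ₂F₁(a, 1 − 2a; 4/3 − a; z₁). (Both arguments z₀ ≈ 0.718 and z₁ ≈ −0.0516 lie in (−1,1), so both hypergeometric series converge absolutely.) -/

import Mathlib

open Real

/-- Gauss hypergeometric function ₂F₁ defined via its power series
    (the tsum; converges absolutely for |z| < 1). -/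
noncomputable def hyp2F1 (a b c z : ℝ) : ℝ :=
  ∑' n : ℕ, ((ascPochhammer ℝ n).eval a * (ascPochhammer ℝ n).eval b /
      (ascPochhammer ℝ n).eval c) * z ^ n / (Nat.factorial n)

noncomputable def z₀ : ℝ := (Real.sqrt 3 + 2) / (3 * Real.sqrt 3)

noncomputable def z₁ : ℝ := (Real.sqrt 3 - 2) / (3 * Real.sqrt 3)

/-- Power-series coefficients with radius of convergence at least one. -/
def GoodCoeff (g : ℕ → ℂ) : Prop :=
  ∀ r : ℝ, 0 < r → r < 1 → Summable (fun n => ‖g n‖ * r ^ n)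

def dcoef (g : ℕ → ℂ) : ℕ → ℂ := fun n => ((n : ℂ) + 1) * g (n + 1)

lemma dc_bound (r s : ℝ) (hr0 : 0 < r) (hrs : r < s) :
    ∃ C : ℝ, ∀ n : ℕ, ((n : ℝ) + 1) * r ^ n ≤ C * s ^ (n + 1) := by
  have hs0 : 0 < s := hr0.trans hrs
  have hq0 : 0 ≤ r / s := by positivity
  have hq1 : r / s < 1 := (div_lt_one hs0).2 hrs
  have h2 : Summable (fun n : ℕ => (n : ℝ) ^ 1 * (r / s) ^ n) :=
    summable_pow_mul_geometric_of_norm_lt_one 1 (by rwa [Real.norm_of_nonneg hq0])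
  obtain ⟨C, hC⟩ := h2.tendsto_atTop_zero.bddAbove_range
  refine ⟨C / r, fun n => ?_⟩
  have hc : ((n + 1 : ℕ) : ℝ) ^ 1 * (r / s) ^ (n + 1) ≤ C := hC (Set.mem_range_self (n + 1))
  rw [pow_one, div_pow, Nat.cast_add, Nat.cast_one] at hc
  have hsn : 0 < s ^ (n + 1) := by positivity
  rw [← mul_div_assoc, div_le_iff₀ hsn] at hc
  rw [div_mul_eq_mul_div, le_div_iff₀ hr0]
  calc _ = ((n : ℝ) + 1) * r ^ (n + 1) := by ring
    _ ≤ _ := hc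

lemma GoodCoeff.dc {g : ℕ → ℂ} (hg : GoodCoeff g) : GoodCoeff (dcoef g) := by
  intro r hr0 hr1
  obtain ⟨s, hrs, hs1⟩ := exists_between hr1
  have hs0 : 0 < s := hr0.trans hrs
  have h1 := (summable_nat_add_iff 1).2 (hg s hs0 hs1)
  obtain ⟨C, hC⟩ := dc_bound r s hr0 hrs
  refine Summable.of_nonneg_of_le (fun n => by positivity) (fun n => ?_) (h1.mul_left C)
  have hn : ‖(n : ℂ) + 1‖ = (n : ℝ) + 1 := by
    have := Complex.norm_natCast (n + 1)
    push_cast at this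
    exact this
  have hd : ‖dcoef g n‖ = ((n : ℝ) + 1) * ‖g (n + 1)‖ := by
    rw [dcoef, norm_mul, hn]
  rw [hd]
  calc _ = (((n : ℝ) + 1) * r ^ n) * ‖g (n + 1)‖ := by ring
    _ ≤ (C * s ^ (n + 1)) * ‖g (n + 1)‖ := mul_le_mul_of_nonneg_right (hC n) (norm_nonneg _)
    _ = _ := by ring

noncomputable def PS (g : ℕ → ℂ) (x : ℂ) : ℂ := ∑' n, g n * x ^ n

lemma GoodCoeff.hasSum {g : ℕ → ℂ} (hg : GoodCoeff g) {x : ℂ} (hx : ‖x‖ < 1) :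
    HasSum (fun n => g n * x ^ n) (PS g x) := by
  obtain ⟨s, hrs, hs1⟩ := exists_between hx
  have hs0 : 0 < s := (norm_nonneg x).trans_lt hrs
  apply Summable.hasSum
  refine Summable.of_norm_bounded (hg s hs0 hs1) (fun n => ?_)
  rw [norm_mul, norm_pow]
  gcongr

lemma GoodCoeff.hasDerivAt {g : ℕ → ℂ} (hg : GoodCoeff g) {x : ℂ} (hx : ‖x‖ < 1) :
    HasDerivAt (PS g) (PS (dcoef g) x) x := by
  obtain ⟨s, hrs, hs1⟩ := exists_between hx
  have hs0 : 0 < s := (norm_nonneg x).trans_lt hrs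
  have hD := hg.dc s hs0 hs1
  have hu : Summable (fun n : ℕ => (n : ℝ) * ‖g n‖ * s ^ (n - 1)) := by
    rw [← summable_nat_add_iff 1]
    refine hD.congr (fun n => ?_)
    have hn : ‖(n : ℂ) + 1‖ = ((n + 1 : ℕ) : ℝ) := by
      rw [← Complex.norm_natCast]; push_cast; rfl
    simp only [dcoef, norm_mul, hn]
    simp
  have h := hasDerivAt_tsum_of_isPreconnected (𝕜 := ℂ) (t := Metric.ball (0 : ℂ) s)
    (g := fun n x => g n * x ^ n) (g' := fun n x => g n * (n * x ^ (n - 1))) (y₀ := x) (y := x)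
    hu Metric.isOpen_ball (convex_ball _ _).isPreconnected
    (fun n y _ => (hasDerivAt_pow n y).const_mul (g n))
    (fun n y hy => by
      have hy' : ‖y‖ < s := by simpa using hy
      rw [norm_mul, norm_mul, norm_pow, Complex.norm_natCast]
      calc _ = n * ‖g n‖ * ‖y‖ ^ (n - 1) := by ring
        _ ≤ _ := by gcongr)
    (by simpa using hrs) (hg.hasSum hx).summable (by simpa using hrs)
  have hs := (hg.dc.hasSum hx)
  have h4 : HasSum (fun n : ℕ => g n * (n * x ^ (n - 1))) (PS (dcoef g) x) := by
    rw [← hasSum_nat_add_iff' 1]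
    simp only [Finset.sum_range_one, Nat.cast_zero, zero_mul, mul_zero, sub_zero]
    refine Eq.mp (congrArg (fun f => HasSum f _) (funext fun n => ?_)) hs
    simp only [dcoef, Nat.add_sub_cancel]
    push_cast
    ring
  exact h.congr_deriv h4.tsum_eq

lemma hasSum_theta {h : ℕ → ℂ} {x S : ℂ}
    (hS : HasSum (fun n : ℕ => ((n : ℂ) + 1) * h (n + 1) * x ^ n) S) :
    HasSum (fun n : ℕ => (n : ℂ) * h n * x ^ n) (x * S) := by
  rw [← hasSum_nat_add_iff' 1]
  simp only [Finset.sum_range_one, Nat.cast_zero, zero_mul, sub_zero]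
  refine Eq.mp (congrArg (fun f => HasSum f _) (funext fun n => ?_)) (hS.mul_left x)
  push_cast; ring

lemma PS_ode {g : ℕ → ℂ} (hg : GoodCoeff g) (a b c : ℂ)
    (hrec : ∀ n : ℕ, ((n : ℂ) + 1) * (n + c) * g (n + 1) = (n + a) * (n + b) * g n)
    {x : ℂ} (hx : ‖x‖ < 1) :
    x * (1 - x) * PS (dcoef (dcoef g)) x = a * b * PS g x - (c - (a + b + 1) * x) * PS (dcoef g) x := by
  have h0 := hg.hasSum hx
  have h1 := hg.dc.hasSum hx
  have h2 := hg.dc.dc.hasSum hx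
  have t1 : HasSum (fun n : ℕ => (n : ℂ) * g n * x ^ n) (x * PS (dcoef g) x) := hasSum_theta h1
  have t2 : HasSum (fun n : ℕ => (n : ℂ) * (dcoef g n) * x ^ n) (x * PS (dcoef (dcoef g)) x) :=
    hasSum_theta h2
  have t3 : HasSum (fun n : ℕ => (n : ℂ) * (((n : ℂ) - 1) * g n) * x ^ n)
      (x * (x * PS (dcoef (dcoef g)) x)) := by
    apply hasSum_theta
    refine Eq.mp (congrArg (fun f => HasSum f _) (funext fun n => ?_)) t2
    simp only [dcoef]; push_cast; ring
  have tot := (((t2.sub t3).add (h1.mul_left c)).sub (t1.mul_left (a + b + 1))).sub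
    (h0.mul_left (a * b))
  have hz : ∀ n : ℕ, (n : ℂ) * (dcoef g n) * x ^ n - (n : ℂ) * (((n : ℂ) - 1) * g n) * x ^ n
      + c * (dcoef g n * x ^ n) - (a + b + 1) * ((n : ℂ) * g n * x ^ n) - a * b * (g n * x ^ n) = 0 := by
    intro n
    simp only [dcoef]
    linear_combination x ^ n * hrec n
  simp only [hz] at tot
  have := tot.unique hasSum_zero
  linear_combination this

/-- The hypergeometric coefficients. -/
noncomputable def hcoef (a b c : ℝ) (n : ℕ) : ℝ :=
  (ascPochhammer ℝ n).eval a * (ascPochhammer ℝ n).eval b /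
      (ascPochhammer ℝ n).eval c / (Nat.factorial n)

lemma hcoef_succ (a b c : ℝ) (hc : ∀ n : ℕ, c ≠ -(n : ℝ)) (n : ℕ) :
    hcoef a b c (n + 1) = ((a + n) * (b + n) / ((c + n) * (n + 1))) * hcoef a b c n := by
  have h : c + n ≠ 0 := fun h => hc n (by linarith)
  have h1 : (n : ℝ) + 1 ≠ 0 := by positivity
  have h2 : (Nat.factorial n : ℝ) ≠ 0 := by positivity
  unfold hcoef
  simp only [ascPochhammer_succ_eval, Nat.factorial_succ, Nat.cast_mul, Nat.cast_add, Nat.cast_one]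
  have h3 : (ascPochhammer ℝ n).eval c ≠ 0 := by
    rw [Ne, ascPochhammer_eval_eq_zero_iff]
    rintro ⟨k, hk, hk'⟩
    exact hc k (by linarith)
  field_simp

lemma hcoef_good (a b c : ℝ) (hc : ∀ n : ℕ, c ≠ -(n : ℝ)) :
    GoodCoeff (fun n => (hcoef a b c n : ℂ)) := by
  intro r hr0 hr1
  have hd : ∀ s : ℝ, Filter.Tendsto (fun n : ℕ => s / (n : ℝ)) Filter.atTop (nhds 0) :=
    fun s => tendsto_const_div_atTop_nhds_zero_nat s
  have hlim : Filter.Tendsto (fun n : ℕ => (a + n) * (b + n) / ((c + n) * (n + 1)))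
      Filter.atTop (nhds 1) := by
    have h1 : Filter.Tendsto (fun n : ℕ => (a / n + 1) * (b / n + 1) / ((c / n + 1) * (1 + 1 / (n : ℝ))))
      Filter.atTop (nhds ((0 + 1) * (0 + 1) / ((0 + 1) * (1 + 0)))) := by
      apply Filter.Tendsto.div
      · exact ((hd a).add_const 1).mul ((hd b).add_const 1)
      · exact ((hd c).add_const 1).mul ((hd 1).const_add 1)
      · norm_num
    have h2 : ((0 + 1) * (0 + 1) / ((0 + 1) * (1 + 0)) : ℝ) = 1 := by norm_num
    rw [h2] at h1
    refine h1.congr' ?_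
    filter_upwards [Filter.eventually_gt_atTop 0] with n hn
    have hn' : (n : ℝ) ≠ 0 := by positivity
    have h : c + n ≠ 0 := fun h => hc n (by linarith)
    have h1 : (n : ℝ) + 1 ≠ 0 := by positivity
    have h' : c / n + 1 ≠ 0 := by
      intro h'; apply h; field_simp at h'; linarith
    field_simp
  obtain ⟨s, hrs, hs1⟩ := exists_between hr1
  have hl2 := (hlim.norm.mul_const r)
  simp only [norm_one, one_mul] at hl2
  refine summable_of_ratio_norm_eventually_le (r := s) hs1 ?_
  filter_upwards [hl2.eventually (gt_mem_nhds hrs)] with n hn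
  simp only [hcoef_succ a b c hc n, Complex.norm_real, norm_mul, norm_norm, norm_pow]
  rw [Real.norm_of_nonneg hr0.le, pow_succ]
  calc _ = (‖(a + n) * (b + n) / ((c + n) * (n + 1))‖ * r) * (‖hcoef a b c n‖ * r ^ n) := by
        simp only [norm_div, norm_mul]; ring
    _ ≤ s * (‖hcoef a b c n‖ * r ^ n) := by
        apply mul_le_mul_of_nonneg_right hn.le; positivity

lemma hcoef_rec (a b c : ℝ) (hc : ∀ n : ℕ, c ≠ -(n : ℝ)) (n : ℕ) :
    ((n : ℂ) + 1) * (n + (c : ℂ)) * (hcoef a b c (n + 1) : ℂ)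
      = (n + (a : ℂ)) * (n + (b : ℂ)) * (hcoef a b c n : ℂ) := by
  have h : c + n ≠ 0 := fun h => hc n (by linarith)
  have h1 : (n : ℝ) + 1 ≠ 0 := by positivity
  have : ((n : ℝ) + 1) * (n + c) * (hcoef a b c (n + 1))
      = (n + a) * (n + b) * (hcoef a b c n) := by
    rw [hcoef_succ a b c hc n]
    field_simp
    ring
  exact_mod_cast this

lemma W_deriv1 (y0 y1 : ℂ → ℂ) (b k : ℂ) (hk : k ≠ 0)
    (h01 : ∀ x, ‖x‖ < 1 → HasDerivAt y0 (y1 x) x) (p : ℂ)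
    (hs : (1 + p) / k ∈ Complex.slitPlane) (hq : 1 - p + p ^ 2 ≠ 0)
    (hz : ‖(1 + p) ^ 3 / (9 * (1 - p + p ^ 2))‖ < 1) :
    HasDerivAt (fun p => ((1 + p) / k) ^ b * y0 ((1 + p) ^ 3 / (9 * (1 - p + p ^ 2))))
      (((1 + p) / k) ^ b * (b / (1 + p) * y0 ((1 + p) ^ 3 / (9 * (1 - p + p ^ 2)))
        + ((1 + p) ^ 2 * (p - 2) ^ 2 / (9 * (1 - p + p ^ 2) ^ 2))
          * y1 ((1 + p) ^ 3 / (9 * (1 - p + p ^ 2))))) p := by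
  have hp : 1 + p ≠ 0 := by
    intro h; rw [h, zero_div] at hs; exact Complex.slitPlane_ne_zero hs rfl
  have d1 : HasDerivAt (fun p : ℂ => 1 + p) 1 p := (hasDerivAt_id p).const_add 1
  have dz : HasDerivAt (fun p : ℂ => (1 + p) ^ 3 / (9 * (1 - p + p ^ 2)))
      ((1 + p) ^ 2 * (p - 2) ^ 2 / (9 * (1 - p + p ^ 2) ^ 2)) p := by
    have d2 : HasDerivAt (fun p : ℂ => 9 * (1 - p + p ^ 2)) (9 * (-1 + 2 * p)) p := by
      refine HasDerivAt.congr_deriv ((((hasDerivAt_id p).const_sub 1).add (hasDerivAt_pow 2 p)).const_mul 9) ?_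
      push_cast; ring
    refine HasDerivAt.congr_deriv ((d1.pow 3).div d2 (by simpa using hq)) ?_
    simp only [Pi.pow_apply]
    push_cast
    field_simp
    ring
  have dc : HasDerivAt (fun p : ℂ => ((1 + p) / k) ^ b) (((1 + p) / k) ^ b * (b / (1 + p))) p := by
    refine HasDerivAt.congr_deriv ((d1.div_const k).cpow_const (c := b) hs) ?_
    rw [Complex.cpow_sub _ _ (Complex.slitPlane_ne_zero hs), Complex.cpow_one]
    field_simp
  have dy := (h01 _ hz).comp p dz
  refine HasDerivAt.congr_deriv (dc.mul dy) ?_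
  ring

lemma W_deriv2 (y0 y1 y2 : ℂ → ℂ) (a b c k : ℂ) (hk : k ≠ 0)
    (hb : b = 1 - 2 * a) (hc : c = 4 / 3 - a)
    (h01 : ∀ x, ‖x‖ < 1 → HasDerivAt y0 (y1 x) x)
    (h12 : ∀ x, ‖x‖ < 1 → HasDerivAt y1 (y2 x) x)
    (hode : ∀ x, ‖x‖ < 1 → x * (1 - x) * y2 x = a * b * y0 x - (c - (a + b + 1) * x) * y1 x)
    (p : ℂ)
    (hs : (1 + p) / k ∈ Complex.slitPlane) (hq : 1 - p + p ^ 2 ≠ 0)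
    (hz : ‖(1 + p) ^ 3 / (9 * (1 - p + p ^ 2))‖ < 1) :
    HasDerivAt (fun p => (((1 + p) / k) ^ b * (b / (1 + p) * y0 ((1 + p) ^ 3 / (9 * (1 - p + p ^ 2)))
        + ((1 + p) ^ 2 * (p - 2) ^ 2 / (9 * (1 - p + p ^ 2) ^ 2))
          * y1 ((1 + p) ^ 3 / (9 * (1 - p + p ^ 2))))))
      (-3 * a * p ^ 2 / (1 + p ^ 3) *
        (((1 + p) / k) ^ b * (b / (1 + p) * y0 ((1 + p) ^ 3 / (9 * (1 - p + p ^ 2)))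
        + ((1 + p) ^ 2 * (p - 2) ^ 2 / (9 * (1 - p + p ^ 2) ^ 2))
          * y1 ((1 + p) ^ 3 / (9 * (1 - p + p ^ 2)))))
        + 9 * a * b * p / (1 + p ^ 3) ^ 2 *
          (((1 + p) / k) ^ b * y0 ((1 + p) ^ 3 / (9 * (1 - p + p ^ 2))))) p := by
  have hp : 1 + p ≠ 0 := by
    intro h; rw [h, zero_div] at hs; exact Complex.slitPlane_ne_zero hs rfl
  have d1 : HasDerivAt (fun p : ℂ => 1 + p) 1 p := (hasDerivAt_id p).const_add 1
  have dq : HasDerivAt (fun p : ℂ => (1 - p + p ^ 2)) ((-1 + 2 * p)) p := by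
    have := ((((hasDerivAt_id p).const_sub 1).add (hasDerivAt_pow 2 p)))
    refine HasDerivAt.congr_deriv (this) ?_
    push_cast; ring
  have dz : HasDerivAt (fun p : ℂ => (1 + p) ^ 3 / (9 * (1 - p + p ^ 2)))
      ((1 + p) ^ 2 * (p - 2) ^ 2 / (9 * (1 - p + p ^ 2) ^ 2)) p := by
    refine HasDerivAt.congr_deriv ((d1.pow 3).div (dq.const_mul 9) (by simpa using hq)) ?_
    simp only [Pi.pow_apply]
    push_cast
    field_simp
    ring
  have dB : HasDerivAt (fun p : ℂ => (1 + p) ^ 2 * (p - 2) ^ 2 / (9 * (1 - p + p ^ 2) ^ 2))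
      (((2 * (1 + p) * (p - 2) ^ 2 + (1 + p) ^ 2 * (2 * (p - 2))) * (1 - p + p ^ 2)
        - (1 + p) ^ 2 * (p - 2) ^ 2 * (2 * (-1 + 2 * p))) / (9 * (1 - p + p ^ 2) ^ 3)) p := by
    refine HasDerivAt.congr_deriv (((d1.pow 2).mul (((hasDerivAt_id p).sub_const 2).pow 2)).div ((dq.pow 2).const_mul 9)
      (by simpa using hq)) ?_
    simp only [id, Pi.mul_apply, Pi.pow_apply]
    push_cast
    field_simp
  have dA : HasDerivAt (fun p : ℂ => b / (1 + p)) (- b / (1 + p) ^ 2) p := by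
    refine HasDerivAt.congr_deriv ((hasDerivAt_const p b).div d1 hp) ?_
    simp
  have dc : HasDerivAt (fun p : ℂ => ((1 + p) / k) ^ b) (((1 + p) / k) ^ b * (b / (1 + p))) p := by
    refine HasDerivAt.congr_deriv ((d1.div_const k).cpow_const (c := b) hs) ?_
    rw [Complex.cpow_sub _ _ (Complex.slitPlane_ne_zero hs), Complex.cpow_one]
    field_simp
  have dy0 := (h01 _ hz).comp p dz
  have dy1 := (h12 _ hz).comp p dz
  have ho := hode _ hz
  refine HasDerivAt.congr_deriv (dc.mul ((dA.mul dy0).add (dB.mul dy1))) ?_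
  simp only [Function.comp, Pi.mul_apply, Pi.add_apply]
  have e1 : (1 + p) ^ 2 * (p - 2) ^ 2 / (9 * (1 - p + p ^ 2) ^ 2)
       * ((1 + p) ^ 2 * (p - 2) ^ 2 / (9 * (1 - p + p ^ 2) ^ 2))
       = ((1 + p) ^ 3 / (9 * (1 - p + p ^ 2))) * (1 - (1 + p) ^ 3 / (9 * (1 - p + p ^ 2)))
         * ((1 + p) * (2 - p) / (1 - p + p ^ 2) ^ 2) := by
    field_simp
    ring
  have e3 : 1 + p ^ 3 = (1 + p) * (1 - p + p ^ 2) := by ring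
  rw [e3]
  generalize hY0 : y0 ((1 + p) ^ 3 / (9 * (1 - p + p ^ 2))) = Y0 at *
  generalize hY1 : y1 ((1 + p) ^ 3 / (9 * (1 - p + p ^ 2))) = Y1 at *
  generalize hY2 : y2 ((1 + p) ^ 3 / (9 * (1 - p + p ^ 2))) = Y2 at *
  generalize ((1 + p) / k) ^ b = J at *
  have e2 : (1 + p) ^ 2 * (p - 2) ^ 2 / (9 * (1 - p + p ^ 2) ^ 2)
       * (Y2 * ((1 + p) ^ 2 * (p - 2) ^ 2 / (9 * (1 - p + p ^ 2) ^ 2)))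
       = ((1 + p) * (2 - p) / (1 - p + p ^ 2) ^ 2) *
        (a * b * Y0 - (c - (a + b + 1) * ((1 + p) ^ 3 / (9 * (1 - p + p ^ 2)))) * Y1) := by
    rw [← ho]
    linear_combination Y2 * e1
  rw [e2]
  subst hb hc
  field_simp
  ring

lemma Z_deriv1 (y0 y1 : ℂ → ℂ) 
    (h01 : ∀ x, ‖x‖ < 1 → HasDerivAt y0 (y1 x) x) (p : ℂ)
    (hq : 1 + p ^ 3 ≠ 0) (hz : ‖1 / (1 + p ^ 3)‖ < 1) :
    HasDerivAt (fun p => y0 (1 / (1 + p ^ 3)))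
      (-3 * p ^ 2 / (1 + p ^ 3) ^ 2 * y1 (1 / (1 + p ^ 3))) p := by
  have dz : HasDerivAt (fun p : ℂ => 1 / (1 + p ^ 3)) (-3 * p ^ 2 / (1 + p ^ 3) ^ 2) p := by
    refine HasDerivAt.congr_deriv ((hasDerivAt_const p (1 : ℂ)).div ((hasDerivAt_pow 3 p).const_add 1) hq) ?_
    push_cast; ring
  refine HasDerivAt.congr_deriv ((h01 _ hz).comp p dz) ?_
  ring

lemma Z_deriv2 (y0 y1 y2 : ℂ → ℂ) (a b c : ℂ)
    (hb : b = 1 - 2 * a) (hc : c = 4 / 3 - a)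
    (h12 : ∀ x, ‖x‖ < 1 → HasDerivAt y1 (y2 x) x)
    (hode : ∀ x, ‖x‖ < 1 → x * (1 - x) * y2 x = a * b * y0 x - (c - (a + b + 1) * x) * y1 x)
    (p : ℂ)
    (hq : 1 + p ^ 3 ≠ 0) (hz : ‖1 / (1 + p ^ 3)‖ < 1) :
    HasDerivAt (fun p => (-3 * p ^ 2 / (1 + p ^ 3) ^ 2 * y1 (1 / (1 + p ^ 3))))
      (-3 * a * p ^ 2 / (1 + p ^ 3) * (-3 * p ^ 2 / (1 + p ^ 3) ^ 2 * y1 (1 / (1 + p ^ 3)))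
        + 9 * a * b * p / (1 + p ^ 3) ^ 2 * y0 (1 / (1 + p ^ 3))) p := by
  have d3 : HasDerivAt (fun p : ℂ => 1 + p ^ 3) (3 * p ^ 2) p := by
    refine HasDerivAt.congr_deriv ((hasDerivAt_pow 3 p).const_add 1) (by norm_num)
  have dz : HasDerivAt (fun p : ℂ => 1 / (1 + p ^ 3)) (-3 * p ^ 2 / (1 + p ^ 3) ^ 2) p := by
    refine HasDerivAt.congr_deriv ((hasDerivAt_const p (1 : ℂ)).div d3 hq) ?_
    ring
  have dB : HasDerivAt (fun p : ℂ => -3 * p ^ 2 / (1 + p ^ 3) ^ 2)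
      ((-6 * p * (1 + p ^ 3) + 18 * p ^ 4) / (1 + p ^ 3) ^ 3) p := by
    refine HasDerivAt.congr_deriv (((hasDerivAt_pow 2 p).const_mul (-3)).div (d3.pow 2) (by simpa using hq)) ?_
    push_cast
    field_simp
    ring
  have ho := hode _ hz
  refine HasDerivAt.congr_deriv (dB.mul ((h12 _ hz).comp p dz)) ?_
  generalize y0 (1 / (1 + p ^ 3)) = Y0 at *
  generalize y1 (1 / (1 + p ^ 3)) = Y1 at *
  generalize y2 (1 / (1 + p ^ 3)) = Y2 at *
  have e2 : -3 * p ^ 2 / (1 + p ^ 3) ^ 2 * (Y2 * (-3 * p ^ 2 / (1 + p ^ 3) ^ 2))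
     = 9 * p / (1 + p ^ 3) ^ 2 * (a * b * Y0 - (c - (a + b + 1) * (1 / (1 + p ^ 3))) * Y1) := by
    rw [← ho]
    field_simp
    ring
  rw [e2]
  subst hb hc
  field_simp
  ring

/-- Uniqueness for second-order linear equations, backwards in time. -/
lemma ode2_zero (E E1 : ℝ → ℂ) (P Q : ℝ → ℂ) (M : ℝ) (s t : ℝ) (hst : s ≤ t)
    (hE : ∀ u ∈ Set.Icc s t, HasDerivAt E (E1 u) u)
    (hE1 : ∀ u ∈ Set.Icc s t, HasDerivAt E1 (P u * E1 u + Q u * E u) u)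
    (hP : ∀ u ∈ Set.Icc s t, ‖P u‖ ≤ M) (hQ : ∀ u ∈ Set.Icc s t, ‖Q u‖ ≤ M)
    (h0 : E t = 0) (h1 : E1 t = 0) : E s = 0 := by
  have hM : 0 ≤ M := (norm_nonneg _).trans (hP s ⟨le_rfl, hst⟩)
  have h := ODE_solution_unique_of_mem_Icc_left (E := ℂ × ℂ) (K := Real.toNNReal (1 + 2 * M))
    (v := fun u e => (e.2, P u * e.2 + Q u * e.1)) (s := fun _ => Set.univ)
    (f := fun u => (E u, E1 u)) (g := fun _ => 0) (a := s) (b := t)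
    (fun u hu => by
      have hu' : u ∈ Set.Icc s t := ⟨hu.1.le, hu.2⟩
      apply LipschitzWith.lipschitzOnWith
      apply LipschitzWith.of_dist_le_mul
      intro x y
      rw [Real.coe_toNNReal _ (by linarith), dist_eq_norm, dist_eq_norm]
      have n1 := norm_fst_le (x - y)
      have n2 := norm_snd_le (x - y)
      have n0 := norm_nonneg (x - y)
      rw [Prod.norm_def]
      apply max_le
      · have : ‖x.2 - y.2‖ ≤ ‖x - y‖ := n2
        simp only [Prod.fst_sub]
        nlinarith [mul_nonneg hM n0]
      · simp only [Prod.snd_sub]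
        calc ‖P u * x.2 + Q u * x.1 - (P u * y.2 + Q u * y.1)‖
            = ‖P u * (x - y).2 + Q u * (x - y).1‖ := by
              congr 1; simp only [Prod.snd_sub, Prod.fst_sub]; ring
          _ ≤ ‖P u‖ * ‖(x - y).2‖ + ‖Q u‖ * ‖(x - y).1‖ := by
              refine (norm_add_le _ _).trans ?_; rw [norm_mul, norm_mul]
          _ ≤ M * ‖x - y‖ + M * ‖x - y‖ := by
              gcongr
              · exact hP u hu'
              · exact hQ u hu'
          _ ≤ _ := by nlinarith)
    (fun u hu => ((hE u hu).prodMk (hE1 u hu)).continuousAt.continuousWithinAt)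
    (fun u hu => ((hE u ⟨hu.1.le, hu.2⟩).prodMk (hE1 u ⟨hu.1.le, hu.2⟩)).hasDerivWithinAt)
    (fun _ _ => Set.mem_univ _)
    continuousOn_const
    (fun u hu => (hasDerivAt_const u (0 : ℂ × ℂ)).hasDerivWithinAt.congr_deriv (by simp; rfl))
    (fun _ _ => Set.mem_univ _)
    (by simp [h0, h1])
  have := h ⟨le_rfl, hst⟩
  simpa using congrArg Prod.fst this

/-- The pulled-back function along the `ω`-rotated branch. -/
noncomputable def W0 (y0 : ℂ → ℂ) (b k p : ℂ) : ℂ :=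
  ((1 + p) / k) ^ b * y0 ((1 + p) ^ 3 / (9 * (1 - p + p ^ 2)))

/-- Its derivative. -/
noncomputable def W1 (y0 y1 : ℂ → ℂ) (b k p : ℂ) : ℂ :=
  ((1 + p) / k) ^ b * (b / (1 + p) * y0 ((1 + p) ^ 3 / (9 * (1 - p + p ^ 2)))
        + ((1 + p) ^ 2 * (p - 2) ^ 2 / (9 * (1 - p + p ^ 2) ^ 2))
          * y1 ((1 + p) ^ 3 / (9 * (1 - p + p ^ 2))))

lemma branch_facts (q : ℂ) (hre : q.re = -1 / 2) (him : q.im ^ 2 = 3 / 4) (u : ℝ)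
    (hu0 : 0 < u) (hu2 : u ≤ 2) :
    (1 + q * u) / ((√3 : ℝ) : ℂ) ∈ Complex.slitPlane ∧ 1 - q * u + (q * u) ^ 2 ≠ 0 ∧
      ‖(1 + q * u) ^ 3 / (9 * (1 - q * u + (q * u) ^ 2))‖ < 1 := by
  have h3 : 0 < √3 := by positivity
  have hqim : q.im ≠ 0 := by intro h; rw [h] at him; norm_num at him
  have hq2 : q ^ 2 + q + 1 = 0 := by
    apply Complex.ext
    · simp [pow_two, hre]; nlinarith
    · simp [pow_two, hre]; ring
  have hq3 : q ^ 3 = 1 := by linear_combination (q - 1) * hq2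
  have hfac : (1 + q * u) * (1 - q * u + (q * u) ^ 2) = ((1 + u ^ 3 : ℝ) : ℂ) := by
    push_cast; linear_combination (u : ℂ) ^ 3 * hq3
  have hu3 : 0 < 1 + u ^ 3 := by positivity
  have hne : (1 + q * u) * (1 - q * u + (q * u) ^ 2) ≠ 0 := by
    rw [hfac]; exact_mod_cast hu3.ne'
  have hA := left_ne_zero_of_mul hne
  have hB := right_ne_zero_of_mul hne
  refine ⟨?_, hB, ?_⟩
  · rw [Complex.mem_slitPlane_iff]
    right
    rw [Complex.div_ofReal_im]
    simp [hqim, hu0.ne']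
  · have hN : ‖1 + q * u‖ ^ 2 = 1 - u + u ^ 2 := by
      rw [Complex.sq_norm, Complex.normSq_apply]
      simp [hre]
      linear_combination u ^ 2 * him
    have e : (1 + q * u) ^ 3 / (9 * (1 - q * u + (q * u) ^ 2))
        = (1 + q * u) ^ 4 / (9 * ((1 + u ^ 3 : ℝ) : ℂ)) := by
      rw [← hfac]; field_simp
    rw [e, norm_div, norm_mul, norm_pow, Complex.norm_real, Real.norm_of_nonneg hu3.le]
    have h4 : ‖1 + q * u‖ ^ 4 = (1 - u + u ^ 2) ^ 2 := by rw [← hN]; ring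
    rw [h4, div_lt_one (by simp; positivity)]
    simp only [Complex.norm_ofNat]
    have hN0 : 0 < 1 - u + u ^ 2 := by nlinarith [sq_nonneg (u - 1)]
    have : (1 - u + u ^ 2) < 9 * (1 + u) := by nlinarith
    calc (1 - u + u ^ 2) ^ 2 = (1 - u + u ^ 2) * (1 - u + u ^ 2) := by ring
      _ < (9 * (1 + u)) * (1 - u + u ^ 2) := by gcongr
      _ = _ := by ring

lemma branch_deriv (y0 y1 y2 : ℂ → ℂ) (a b c : ℂ)
    (hb : b = 1 - 2 * a) (hc : c = 4 / 3 - a)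
    (h01 : ∀ x, ‖x‖ < 1 → HasDerivAt y0 (y1 x) x)
    (h12 : ∀ x, ‖x‖ < 1 → HasDerivAt y1 (y2 x) x)
    (hode : ∀ x, ‖x‖ < 1 → x * (1 - x) * y2 x = a * b * y0 x - (c - (a + b + 1) * x) * y1 x)
    (q : ℂ) (hre : q.re = -1 / 2) (him : q.im ^ 2 = 3 / 4) (u : ℝ)
    (hu0 : 0 < u) (hu2 : u ≤ 2) :
    HasDerivAt (fun u : ℝ => W0 y0 b ((√3 : ℝ) : ℂ) (q * u))
      (q * W1 y0 y1 b ((√3 : ℝ) : ℂ) (q * u)) u ∧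
    HasDerivAt (fun u : ℝ => q * W1 y0 y1 b ((√3 : ℝ) : ℂ) (q * u))
      (-3 * a * u ^ 2 / (1 + u ^ 3) * (q * W1 y0 y1 b ((√3 : ℝ) : ℂ) (q * u))
        + 9 * a * b * u / (1 + u ^ 3) ^ 2 * W0 y0 b ((√3 : ℝ) : ℂ) (q * u)) u := by
  obtain ⟨f1, f2, f3⟩ := branch_facts q hre him u hu0 hu2
  have hk : ((√3 : ℝ) : ℂ) ≠ 0 := by
    have h3 : 0 < √3 := by positivity
    exact_mod_cast h3.ne'
  have hq2 : q ^ 2 + q + 1 = 0 := by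
    apply Complex.ext
    · simp [pow_two, hre]; nlinarith
    · simp [pow_two, hre]; ring
  have hq3 : q ^ 3 = 1 := by linear_combination (q - 1) * hq2
  have dl : HasDerivAt (fun v : ℂ => q * v) q (u : ℂ) := by
    simpa using (hasDerivAt_id (u : ℂ)).const_mul q
  have d1 : HasDerivAt (W0 y0 b ((√3 : ℝ) : ℂ)) (W1 y0 y1 b ((√3 : ℝ) : ℂ) (q * u)) (q * u) :=
    W_deriv1 y0 y1 b _ hk h01 (q * u) f1 f2 f3
  have d2 : HasDerivAt (W1 y0 y1 b ((√3 : ℝ) : ℂ)) (-3 * a * (q * u) ^ 2 / (1 + (q * u) ^ 3) *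
        (W1 y0 y1 b ((√3 : ℝ) : ℂ) (q * u)) + 9 * a * b * (q * u) / (1 + (q * u) ^ 3) ^ 2 *
        W0 y0 b ((√3 : ℝ) : ℂ) (q * u)) (q * u) :=
    W_deriv2 y0 y1 y2 a b c _ hk hb hc h01 h12 hode (q * u) f1 f2 f3
  have e3 : (q * (u : ℂ)) ^ 3 = (u : ℂ) ^ 3 := by rw [mul_pow, hq3, one_mul]
  constructor
  · refine HasDerivAt.congr_deriv (HasDerivAt.comp_ofReal (d1.comp (u : ℂ) dl)) ?_
    ring
  · refine HasDerivAt.congr_deriv (HasDerivAt.comp_ofReal ((d2.comp (u : ℂ) dl).const_mul q)) ?_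
    rw [e3]
    linear_combination ((-3 * a * u ^ 2 / (1 + u ^ 3) * (q * W1 y0 y1 b ((√3 : ℝ) : ℂ) (q * u)))
        + 9 * a * b * u / (1 + u ^ 3) ^ 2 * W0 y0 b ((√3 : ℝ) : ℂ) (q * u)) * hq3

lemma main_branch_deriv (y0 y1 y2 : ℂ → ℂ) (a b c : ℂ)
    (hb : b = 1 - 2 * a) (hc : c = 4 / 3 - a)
    (h01 : ∀ x, ‖x‖ < 1 → HasDerivAt y0 (y1 x) x)
    (h12 : ∀ x, ‖x‖ < 1 → HasDerivAt y1 (y2 x) x)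
    (hode : ∀ x, ‖x‖ < 1 → x * (1 - x) * y2 x = a * b * y0 x - (c - (a + b + 1) * x) * y1 x)
    (u : ℝ) (hu0 : 0 < u) :
    HasDerivAt (fun u : ℝ => y0 (1 / (1 + (u : ℂ) ^ 3)))
      (-3 * (u : ℂ) ^ 2 / (1 + (u : ℂ) ^ 3) ^ 2 * y1 (1 / (1 + (u : ℂ) ^ 3))) u ∧
    HasDerivAt (fun u : ℝ => -3 * (u : ℂ) ^ 2 / (1 + (u : ℂ) ^ 3) ^ 2 * y1 (1 / (1 + (u : ℂ) ^ 3)))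
      (-3 * a * u ^ 2 / (1 + u ^ 3) *
        (-3 * (u : ℂ) ^ 2 / (1 + (u : ℂ) ^ 3) ^ 2 * y1 (1 / (1 + (u : ℂ) ^ 3)))
        + 9 * a * b * u / (1 + u ^ 3) ^ 2 * y0 (1 / (1 + (u : ℂ) ^ 3))) u := by
  have hu3 : 0 < u ^ 3 := by positivity
  have e : 1 + (u : ℂ) ^ 3 = ((1 + u ^ 3 : ℝ) : ℂ) := by push_cast; rfl
  have hq : 1 + (u : ℂ) ^ 3 ≠ 0 := by
    rw [e]; exact_mod_cast (by linarith : (1 + u ^ 3) ≠ 0)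
  have hz : ‖1 / (1 + (u : ℂ) ^ 3)‖ < 1 := by
    rw [e, norm_div, norm_one, Complex.norm_real, Real.norm_of_nonneg (by linarith),
      div_lt_one (by linarith)]
    linarith
  exact ⟨(Z_deriv1 y0 y1 h01 u hq hz).comp_ofReal,
    (Z_deriv2 y0 y1 y2 a b c hb hc h12 hode u hq hz).comp_ofReal⟩

lemma three_term (y0 y1 y2 : ℂ → ℂ) (a b c : ℂ)
    (hb : b = 1 - 2 * a) (hc : c = 4 / 3 - a)
    (h01 : ∀ x, ‖x‖ < 1 → HasDerivAt y0 (y1 x) x)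
    (h12 : ∀ x, ‖x‖ < 1 → HasDerivAt y1 (y2 x) x)
    (hode : ∀ x, ‖x‖ < 1 → x * (1 - x) * y2 x = a * b * y0 x - (c - (a + b + 1) * x) * y1 x)
    (w w' : ℂ) (hw : w = -1 / 2 + ((√3 : ℝ) : ℂ) / 2 * Complex.I)
    (hw' : w' = -1 / 2 - ((√3 : ℝ) : ℂ) / 2 * Complex.I)
    (u₀ : ℝ) (hu0 : 0 < u₀) (hu2 : u₀ ≤ 2) :
    y0 (1 / (1 + (u₀ : ℂ) ^ 3))
      + w * Complex.exp (π / 2 * Complex.I * b) * W0 y0 b ((√3 : ℝ) : ℂ) (w' * u₀)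
      + w' * Complex.exp (-(π / 2 * Complex.I * b)) * W0 y0 b ((√3 : ℝ) : ℂ) (w * u₀) = 0 := by
  have hs2 : (√3) ^ 2 = 3 := Real.sq_sqrt (by norm_num)
  have hs2c : ((√3 : ℝ) : ℂ) ^ 2 = 3 := by exact_mod_cast hs2
  have hI : Complex.I ^ 2 = -1 := Complex.I_sq
  have hk : ((√3 : ℝ) : ℂ) ≠ 0 := by
    have h3 : 0 < √3 := by positivity
    exact_mod_cast h3.ne'
  have hwre : w.re = -1 / 2 := by rw [hw]; simp
  have hwre' : w'.re = -1 / 2 := by rw [hw']; simp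
  have hwim : w.im ^ 2 = 3 / 4 := by rw [hw]; simp; nlinarith
  have hwim' : w'.im ^ 2 = 3 / 4 := by rw [hw']; simp; nlinarith
  set κ := w * Complex.exp (π / 2 * Complex.I * b) with hκ
  set κ' := w' * Complex.exp (-(π / 2 * Complex.I * b)) with hκ'
  set k : ℂ := ((√3 : ℝ) : ℂ) with hkdef
  have j1 : (1 + w' * ((2 : ℝ) : ℂ)) = -(k * Complex.I) := by rw [hw']; push_cast; ring
  have j2 : (1 + w * ((2 : ℝ) : ℂ)) = k * Complex.I := by rw [hw]; push_cast; ring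
  have m1 : (1 + w' * ((2 : ℝ) : ℂ)) / k = -Complex.I := by rw [j1]; field_simp
  have m2 : (1 + w * ((2 : ℝ) : ℂ)) / k = Complex.I := by rw [j2]; field_simp
  have p1 : κ * (-Complex.I) ^ b = w := by
    rw [Complex.cpow_def_of_ne_zero (by simp), Complex.log_neg_I, hκ, mul_assoc, ← Complex.exp_add]
    have : π / 2 * Complex.I * b + -(π / 2) * Complex.I * b = 0 := by ring
    rw [this, Complex.exp_zero, mul_one]
  have p2 : κ' * (Complex.I) ^ b = w' := by
    rw [Complex.cpow_def_of_ne_zero (by simp), Complex.log_I, hκ', mul_assoc, ← Complex.exp_add]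
    have : -(π / 2 * Complex.I * b) + (π / 2) * Complex.I * b = 0 := by ring
    rw [this, Complex.exp_zero, mul_one]
  have r1 : 1 - w' * ((2 : ℝ) : ℂ) + (w' * ((2 : ℝ) : ℂ)) ^ 2 = 3 * k * Complex.I := by
    rw [hw']; push_cast
    linear_combination k ^ 2 * hI - hs2c
  have r2 : 1 - w * ((2 : ℝ) : ℂ) + (w * ((2 : ℝ) : ℂ)) ^ 2 = -(3 * k * Complex.I) := by
    rw [hw]; push_cast
    linear_combination k ^ 2 * hI - hs2c
  have hkI : (k * Complex.I) ^ 2 = -3 := by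
    linear_combination k ^ 2 * hI - hs2c
  have hkI0 : k * Complex.I ≠ 0 := mul_ne_zero hk Complex.I_ne_zero
  have z1 : (1 + w' * ((2 : ℝ) : ℂ)) ^ 3 / (9 * (1 - w' * ((2 : ℝ) : ℂ) + (w' * ((2 : ℝ) : ℂ)) ^ 2))
      = 1 / 9 := by
    rw [r1, j1, div_eq_div_iff (by simpa using hk) (by norm_num)]
    linear_combination -9 * (k * Complex.I) * hkI
  have z2 : (1 + w * ((2 : ℝ) : ℂ)) ^ 3 / (9 * (1 - w * ((2 : ℝ) : ℂ) + (w * ((2 : ℝ) : ℂ)) ^ 2))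
      = 1 / 9 := by
    rw [r2, j2, div_eq_div_iff (by simpa using hk) (by norm_num)]
    linear_combination 9 * (k * Complex.I) * hkI
  have B1 : (1 + w' * ((2 : ℝ) : ℂ)) ^ 2 * (w' * ((2 : ℝ) : ℂ) - 2) ^ 2
      / (9 * (1 - w' * ((2 : ℝ) : ℂ) + (w' * ((2 : ℝ) : ℂ)) ^ 2) ^ 2)
      = (2 + 2 * (k * Complex.I)) / 27 := by
    have t : (w' * ((2 : ℝ) : ℂ) - 2) ^ 2 = 6 + 6 * (k * Complex.I) := by
      rw [hw']; push_cast; linear_combination hkI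
    have t2 : (3 * k * Complex.I) ^ 2 = -27 := by linear_combination 9 * hkI
    rw [r1, j1, t, t2, neg_sq, hkI]
    ring
  have B2 : (1 + w * ((2 : ℝ) : ℂ)) ^ 2 * (w * ((2 : ℝ) : ℂ) - 2) ^ 2
      / (9 * (1 - w * ((2 : ℝ) : ℂ) + (w * ((2 : ℝ) : ℂ)) ^ 2) ^ 2)
      = (2 - 2 * (k * Complex.I)) / 27 := by
    have t : (w * ((2 : ℝ) : ℂ) - 2) ^ 2 = 6 - 6 * (k * Complex.I) := by
      rw [hw]; push_cast; linear_combination hkI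
    have t2 : (3 * k * Complex.I) ^ 2 = -27 := by linear_combination 9 * hkI
    rw [r2, j2, t, neg_sq, t2, hkI]
    ring
  have hww : w * w' = 1 := by
    rw [hw, hw']; linear_combination (-1 / 4) * hkI
  have z0 : 1 / (1 + (((2 : ℝ) : ℂ)) ^ 3) = 1 / 9 := by push_cast; norm_num
  have hden : ∀ u ∈ Set.Icc u₀ 2, ‖(1 : ℂ) + (u : ℂ) ^ 3‖ = 1 + u ^ 3 ∧ 1 ≤ 1 + u ^ 3 := by
    intro u hu
    have hup : 0 < u := lt_of_lt_of_le hu0 hu.1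
    have hu3 : 0 < u ^ 3 := by positivity
    have e : 1 + (u : ℂ) ^ 3 = ((1 + u ^ 3 : ℝ) : ℂ) := by push_cast; rfl
    refine ⟨?_, by linarith⟩
    rw [e, Complex.norm_real, Real.norm_of_nonneg (by linarith)]
  refine ode2_zero
    (fun u : ℝ => y0 (1 / (1 + (u : ℂ) ^ 3)) + κ * W0 y0 b k (w' * u) + κ' * W0 y0 b k (w * u))
    (fun u : ℝ => -3 * (u : ℂ) ^ 2 / (1 + (u : ℂ) ^ 3) ^ 2 * y1 (1 / (1 + (u : ℂ) ^ 3))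
      + κ * (w' * W1 y0 y1 b k (w' * u)) + κ' * (w * W1 y0 y1 b k (w * u)))
    (fun u : ℝ => -3 * a * u ^ 2 / (1 + u ^ 3)) (fun u : ℝ => 9 * a * b * u / (1 + u ^ 3) ^ 2)
    (12 * ‖a‖ + 18 * ‖a‖ * ‖b‖) u₀ 2 hu2 ?_ ?_ ?_ ?_ ?_ ?_
  · intro u hu
    have hup : 0 < u := lt_of_lt_of_le hu0 hu.1
    exact ((main_branch_deriv y0 y1 y2 a b c hb hc h01 h12 hode u hup).1.add
      ((branch_deriv y0 y1 y2 a b c hb hc h01 h12 hode w' hwre' hwim' u hup hu.2).1.const_mul κ)).add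
      ((branch_deriv y0 y1 y2 a b c hb hc h01 h12 hode w hwre hwim u hup hu.2).1.const_mul κ')
  · intro u hu
    have hup : 0 < u := lt_of_lt_of_le hu0 hu.1
    refine HasDerivAt.congr_deriv (((main_branch_deriv y0 y1 y2 a b c hb hc h01 h12 hode u hup).2.add
      ((branch_deriv y0 y1 y2 a b c hb hc h01 h12 hode w' hwre' hwim' u hup hu.2).2.const_mul κ)).add
      ((branch_deriv y0 y1 y2 a b c hb hc h01 h12 hode w hwre hwim u hup hu.2).2.const_mul κ')) ?_
    ring
  · intro u hu
    obtain ⟨h1, h2⟩ := hden u hu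
    have hup : 0 < u := lt_of_lt_of_le hu0 hu.1
    have hu2' : u ≤ 2 := hu.2
    rw [norm_div, h1]
    refine (div_le_self (norm_nonneg _) h2).trans ?_
    simp only [norm_mul, norm_pow, norm_neg, Complex.norm_ofNat, Complex.norm_real,
      Real.norm_of_nonneg hup.le]
    have : u ^ 2 ≤ 4 := by nlinarith
    have ha := norm_nonneg a
    have hb' := mul_nonneg ha (norm_nonneg b)
    nlinarith
  · intro u hu
    obtain ⟨h1, h2⟩ := hden u hu
    have hup : 0 < u := lt_of_lt_of_le hu0 hu.1
    have hu2' : u ≤ 2 := hu.2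
    rw [norm_div, norm_pow, h1]
    refine (div_le_self (norm_nonneg _) (one_le_pow₀ h2)).trans ?_
    simp only [norm_mul, Complex.norm_ofNat, Complex.norm_real,
      Real.norm_of_nonneg hup.le]
    have ha := norm_nonneg a
    have hb' := mul_nonneg ha (norm_nonneg b)
    nlinarith
  · show y0 (1 / (1 + (((2 : ℝ)) : ℂ) ^ 3)) + κ * W0 y0 b k (w' * ((2 : ℝ) : ℂ))
      + κ' * W0 y0 b k (w * ((2 : ℝ) : ℂ)) = 0
    unfold W0
    rw [z0, z1, z2, m1, m2, ← mul_assoc, ← mul_assoc, p1, p2, hw, hw']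
    ring
  · show -3 * (((2 : ℝ)) : ℂ) ^ 2 / (1 + (((2 : ℝ)) : ℂ) ^ 3) ^ 2 * y1 (1 / (1 + (((2 : ℝ)) : ℂ) ^ 3))
      + κ * (w' * W1 y0 y1 b k (w' * ((2 : ℝ) : ℂ))) + κ' * (w * W1 y0 y1 b k (w * ((2 : ℝ) : ℂ))) = 0
    unfold W1
    rw [z0, z1, z2, m1, m2, B1, B2, j1, j2]
    have c1 : -3 * (((2 : ℝ)) : ℂ) ^ 2 / (1 + (((2 : ℝ)) : ℂ) ^ 3) ^ 2 = -4 / 27 := by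
      push_cast; norm_num
    rw [c1]
    have hdiv : b / -(k * Complex.I) = -(b / (k * Complex.I)) := by rw [div_neg]
    rw [hdiv]
    generalize b / (k * Complex.I) = t at *
    generalize y0 (1 / 9) = Y0 at *
    generalize y1 (1 / 9) = Y1 at *
    linear_combination w' * (-t * Y0 + (2 + 2 * (k * Complex.I)) / 27 * Y1) * p1
      + w * (t * Y0 + (2 - 2 * (k * Complex.I)) / 27 * Y1) * p2 + (4 / 27 * Y1) * hww

lemma hyp2F1_eq_PS (a b c z : ℝ) :
    ((hyp2F1 a b c z : ℝ) : ℂ) = PS (fun n => (hcoef a b c n : ℂ)) (z : ℂ) := by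
  unfold hyp2F1 PS hcoef
  rw [Complex.ofReal_tsum]
  refine tsum_congr (fun n => ?_)
  push_cast
  ring

/-- Value of the power factor at the end point. -/
lemma cos_pi_twelve' : Real.cos (π / 12) = √2 * (1 + √3) / 4 := by
  have : π / 12 = π / 3 - π / 4 := by ring
  rw [this, Real.cos_sub, Real.cos_pi_div_three, Real.cos_pi_div_four, Real.sin_pi_div_three,
    Real.sin_pi_div_four]
  ring

lemma exp_endpoint (σ : ℝ) (hσ : σ = 1 ∨ σ = -1) :
    Complex.exp (((-Real.log (2 * Real.cos (π / 12)) : ℝ) : ℂ) + ((σ * (π / 4) : ℝ) : ℂ) * Complex.I)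
      = (((√3 : ℝ) : ℂ) - 1) / 2 * (1 + σ * Complex.I) := by
  have h3 : 0 < √3 := by positivity
  have h2 : 0 < √2 := by positivity
  have hs2 : (√3) ^ 2 = 3 := Real.sq_sqrt (by norm_num)
  have hc : 0 < 2 * Real.cos (π / 12) := by rw [cos_pi_twelve']; positivity
  have hcs : Complex.exp (((σ * (π / 4) : ℝ) : ℂ) * Complex.I)
      = ((√2 / 2 : ℝ) : ℂ) * (1 + σ * Complex.I) := by
    rw [Complex.exp_mul_I, ← Complex.ofReal_cos, ← Complex.ofReal_sin]
    rcases hσ with rfl | rfl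
    · rw [one_mul, Real.cos_pi_div_four, Real.sin_pi_div_four]; push_cast; ring
    · rw [neg_one_mul, Real.cos_neg, Real.sin_neg, Real.cos_pi_div_four, Real.sin_pi_div_four]
      push_cast; ring
  rw [Complex.exp_add, hcs, ← Complex.ofReal_exp, Real.exp_neg, Real.exp_log hc, ← mul_assoc,
    ← Complex.ofReal_mul]
  have : (2 * Real.cos (π / 12))⁻¹ * (√2 / 2) = (√3 - 1) / 2 := by
    rw [cos_pi_twelve']
    field_simp
    nlinarith
  rw [this]
  push_cast
  ring

lemma cpow_endpoint (σ : ℝ) (hσ : σ = 1 ∨ σ = -1) (b : ℂ) :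
    ((((√3 : ℝ) : ℂ) - 1) / 2 * (1 + σ * Complex.I)) ^ b
      = Complex.exp (((-Real.log (2 * Real.cos (π / 12)) : ℝ) : ℂ) * b)
        * Complex.exp (((σ * (π / 4) : ℝ) : ℂ) * Complex.I * b) := by
  rw [← exp_endpoint σ hσ, Complex.cpow_def_of_ne_zero (Complex.exp_ne_zero _), Complex.log_exp,
    ← Complex.exp_add, add_mul]
  · rcases hσ with rfl | rfl <;> simp <;> linarith [Real.pi_pos]
  · rcases hσ with rfl | rfl <;> simp <;> linarith [Real.pi_pos]

/-- Oscillating ratio of Beukers–Forsgård evaluations. -/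
theorem beukers_forsgard_ratio (a : ℝ) (hc : ∀ n : ℕ, 4/3 - a ≠ -(n : ℝ)) :
    hyp2F1 a (1 - 2*a) (4/3 - a) z₀ =
      (4:ℝ) ^ a * Real.cos (π/12) ^ (2*a - 1) * Real.cos (π/2 * (a + 1/6)) *
        hyp2F1 a (1 - 2*a) (4/3 - a) z₁ := by
  have h3 : 0 < √3 := by positivity
  have hs2 : (√3) ^ 2 = 3 := Real.sq_sqrt (by norm_num)
  have hs1 : 1 < √3 := by nlinarith
  have hsl : √3 ≤ 3 := by nlinarith
  have hg := hcoef_good a (1 - 2 * a) (4 / 3 - a) hc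
  have hrec := hcoef_rec a (1 - 2 * a) (4 / 3 - a) hc
  have key := three_term _ _ _ (a : ℂ) ((1 - 2 * a : ℝ) : ℂ) ((4 / 3 - a : ℝ) : ℂ)
    (by push_cast; ring) (by push_cast; ring)
    (fun x hx => hg.hasDerivAt hx) (fun x hx => hg.dc.hasDerivAt hx)
    (fun x hx => PS_ode hg _ _ _ hrec hx) _ _ rfl rfl (√3 - 1) (by linarith) (by linarith)
  have hk : ((√3 : ℝ) : ℂ) ≠ 0 := by exact_mod_cast h3.ne'
  have hs2c : ((√3 : ℝ) : ℂ) ^ 2 = 3 := by exact_mod_cast hs2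
  have hI : Complex.I ^ 2 = -1 := Complex.I_sq
  have ez0 : 1 / (1 + ((√3 - 1 : ℝ) : ℂ) ^ 3) = ((z₀ : ℝ) : ℂ) := by
    have : 1 / (1 + (√3 - 1) ^ 3) = z₀ := by
      unfold z₀
      have e : 1 + (√3 - 1) ^ 3 = 6 * √3 - 9 := by
        linear_combination (√3 - 3) * hs2
      rw [e, div_eq_div_iff (by nlinarith) (by positivity)]
      nlinarith
    rw [← this]; push_cast; rfl
  have hkI : (((√3 : ℝ) : ℂ) * Complex.I) ^ 2 = -3 := by
    linear_combination ((√3 : ℝ) : ℂ) ^ 2 * hI - hs2c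
  have j : ∀ σ : ℝ, (1 + (-1 / 2 + σ * (((√3 : ℝ) : ℂ) / 2 * Complex.I)) * ((√3 - 1 : ℝ) : ℂ))
      = ((√3 : ℝ) : ℂ) * ((((√3 : ℝ) : ℂ) - 1) / 2 * (1 + σ * Complex.I)) := by
    intro σ
    push_cast
    linear_combination (-1 / 2) * hs2c
  have ez1 : ∀ σ : ℝ, (σ = 1 ∨ σ = -1) →
      (1 + (-1 / 2 + σ * (((√3 : ℝ) : ℂ) / 2 * Complex.I)) * ((√3 - 1 : ℝ) : ℂ)) ^ 3 /
      (9 * (1 - (-1 / 2 + σ * (((√3 : ℝ) : ℂ) / 2 * Complex.I)) * ((√3 - 1 : ℝ) : ℂ)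
        + ((-1 / 2 + σ * (((√3 : ℝ) : ℂ) / 2 * Complex.I)) * ((√3 - 1 : ℝ) : ℂ)) ^ 2))
      = ((z₁ : ℝ) : ℂ) := by
    intro σ hσ
    have hσ2 : (σ : ℂ) ^ 2 = 1 := by rcases hσ with rfl | rfl <;> simp
    have hσr : σ ^ 2 = 1 := by rcases hσ with rfl | rfl <;> simp
    set q : ℂ := -1 / 2 + σ * (((√3 : ℝ) : ℂ) / 2 * Complex.I) with hq
    have hf := (branch_facts q (by rw [hq]; simp)
      (by rw [hq]; simp; nlinarith) (√3 - 1) (by linarith) (by linarith)).2.1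
    have hp : 1 + q * ((√3 - 1 : ℝ) : ℂ) = ((√3 : ℝ) : ℂ) * ((((√3 : ℝ) : ℂ) - 1) / 2 * (1 + σ * Complex.I)) := j σ
    have hz : ((z₁ : ℝ) : ℂ) = (((√3 : ℝ) : ℂ) - 2) / (3 * ((√3 : ℝ) : ℂ)) := by
      unfold z₁; push_cast; rfl
    rw [hz, div_eq_div_iff (by simpa using hf) (by simpa using hk)]
    have e : 1 - q * ((√3 - 1 : ℝ) : ℂ) + (q * ((√3 - 1 : ℝ) : ℂ)) ^ 2
       = 3 - 3 * (1 + q * ((√3 - 1 : ℝ) : ℂ)) + (1 + q * ((√3 - 1 : ℝ) : ℂ)) ^ 2 := by ring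
    rw [e, hp]
    have hi2 : (1 + σ * Complex.I) ^ 2 = 2 * σ * Complex.I := by
      linear_combination Complex.I ^ 2 * hσ2 + hI
    have hi3 : (1 + σ * Complex.I) ^ 3 = 2 * σ * Complex.I - 2 := by
      linear_combination (1 + σ * Complex.I) * hi2 + 2 * Complex.I ^ 2 * hσ2 + 2 * hI
    generalize ((√3 : ℝ) : ℂ) = s at *
    have e1 : (s * ((s - 1) / 2 * (1 + σ * Complex.I))) ^ 3
        = s ^ 3 * (s - 1) ^ 3 / 8 * (2 * σ * Complex.I - 2) := by rw [← hi3]; ring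
    have e2 : (s * ((s - 1) / 2 * (1 + σ * Complex.I))) ^ 2
        = s ^ 2 * (s - 1) ^ 2 / 4 * (2 * σ * Complex.I) := by rw [← hi2]; ring
    rw [e1, e2]
    have s3 : s ^ 3 = 3 * s := by linear_combination s * hs2c
    have s4 : (s - 1) ^ 3 = 6 * s - 10 := by linear_combination (s - 3) * hs2c
    have s5 : (s - 1) ^ 2 = 4 - 2 * s := by linear_combination hs2c
    rw [s3, s4, s5, hs2c]
    linear_combination (9 / 8 * (6 * s - 10) * (2 * (σ * Complex.I) - 2)
      + 27 / 2 * (s - 2) * (1 + σ * Complex.I) - 27 / 2 * (1 - σ * Complex.I)) * hs2c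
  have hW : ∀ σ : ℝ, (σ = 1 ∨ σ = -1) →
      W0 (PS (fun n => (hcoef a (1 - 2 * a) (4 / 3 - a) n : ℂ))) ((1 - 2 * a : ℝ) : ℂ)
        ((√3 : ℝ) : ℂ) ((-1 / 2 + σ * (((√3 : ℝ) : ℂ) / 2 * Complex.I)) * ((√3 - 1 : ℝ) : ℂ))
      = Complex.exp (((-Real.log (2 * Real.cos (π / 12)) : ℝ) : ℂ) * ((1 - 2 * a : ℝ) : ℂ))
        * Complex.exp (((σ * (π / 4) : ℝ) : ℂ) * Complex.I * ((1 - 2 * a : ℝ) : ℂ))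
        * ((hyp2F1 a (1 - 2 * a) (4 / 3 - a) z₁ : ℝ) : ℂ) := by
    intro σ hσ
    unfold W0
    rw [ez1 σ hσ, j σ, mul_div_cancel_left₀ _ hk, cpow_endpoint σ hσ, hyp2F1_eq_PS]
  have a1 : (-1 / 2 + ((√3 : ℝ) : ℂ) / 2 * Complex.I)
      = (-1 / 2 + ((1 : ℝ) : ℂ) * (((√3 : ℝ) : ℂ) / 2 * Complex.I)) := by push_cast; ring
  have a2 : (-1 / 2 - ((√3 : ℝ) : ℂ) / 2 * Complex.I)
      = (-1 / 2 + ((-1 : ℝ) : ℂ) * (((√3 : ℝ) : ℂ) / 2 * Complex.I)) := by push_cast; ring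
  rw [a1, a2, hW 1 (Or.inl rfl), hW (-1) (Or.inr rfl), ez0, ← hyp2F1_eq_PS] at key
  have hexp : (4 : ℝ) ^ a * Real.cos (π / 12) ^ (2 * a - 1)
      = 2 * Real.exp (-Real.log (2 * Real.cos (π / 12)) * (1 - 2 * a)) := by
    have hcos : 0 < Real.cos (π / 12) := by rw [cos_pi_twelve']; positivity
    have h4 : (4 : ℝ) ^ a = 2 * 2 ^ (2 * a - 1) := by
      rw [show (4 : ℝ) = 2 ^ (2 : ℝ) by norm_num, ← Real.rpow_mul (by norm_num),
        Real.rpow_sub (by norm_num), Real.rpow_one]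
      ring
    rw [h4, mul_assoc, ← Real.mul_rpow (by norm_num) hcos.le,
      Real.rpow_def_of_pos (by positivity)]
    congr 2
    ring
  have hcosθ : Real.cos (π / 2 * (a + 1 / 6))
      = Real.cos (π / 4 * (1 - 2 * a)) / 2 + √3 / 2 * Real.sin (π / 4 * (1 - 2 * a)) := by
    have : π / 2 * (a + 1 / 6) = -(π / 4 * (1 - 2 * a) - π / 3) := by ring
    rw [this, Real.cos_neg, Real.cos_sub, Real.cos_pi_div_three, Real.sin_pi_div_three]
    ring
  rw [hexp, hcosθ]
  have g1 : Complex.exp (π / 2 * Complex.I * ((1 - 2 * a : ℝ) : ℂ))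
      * Complex.exp (((-1 * (π / 4) : ℝ) : ℂ) * Complex.I * ((1 - 2 * a : ℝ) : ℂ))
      = ((Real.cos (π / 4 * (1 - 2 * a)) : ℝ) : ℂ)
        + ((Real.sin (π / 4 * (1 - 2 * a)) : ℝ) : ℂ) * Complex.I := by
    rw [← Complex.exp_add, Complex.ofReal_cos, Complex.ofReal_sin, ← Complex.exp_mul_I]
    congr 1; push_cast; ring
  have g2 : Complex.exp (-(π / 2 * Complex.I * ((1 - 2 * a : ℝ) : ℂ)))
      * Complex.exp (((1 * (π / 4) : ℝ) : ℂ) * Complex.I * ((1 - 2 * a : ℝ) : ℂ))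
      = ((Real.cos (π / 4 * (1 - 2 * a)) : ℝ) : ℂ)
        - ((Real.sin (π / 4 * (1 - 2 * a)) : ℝ) : ℂ) * Complex.I := by
    have : ((Real.cos (π / 4 * (1 - 2 * a)) : ℝ) : ℂ)
        - ((Real.sin (π / 4 * (1 - 2 * a)) : ℝ) : ℂ) * Complex.I
        = Complex.exp (((-(π / 4 * (1 - 2 * a)) : ℝ) : ℂ) * Complex.I) := by
      rw [Complex.exp_mul_I, ← Complex.ofReal_cos, ← Complex.ofReal_sin, Real.cos_neg, Real.sin_neg]
      push_cast; ring
    rw [this, ← Complex.exp_add]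
    congr 1; push_cast; ring
  have hX : Complex.exp (((-Real.log (2 * Real.cos (π / 12)) : ℝ) : ℂ) * ((1 - 2 * a : ℝ) : ℂ))
      = ((Real.exp (-Real.log (2 * Real.cos (π / 12)) * (1 - 2 * a)) : ℝ) : ℂ) := by
    rw [← Complex.ofReal_mul, ← Complex.ofReal_exp]
  rw [hX] at key
  generalize Real.exp (-Real.log (2 * Real.cos (π / 12)) * (1 - 2 * a)) = X at *
  generalize Real.cos (π / 4 * (1 - 2 * a)) = cc at *
  generalize Real.sin (π / 4 * (1 - 2 * a)) = ss at *
  generalize hyp2F1 a (1 - 2 * a) (4 / 3 - a) z₀ = R0 at *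
  generalize hyp2F1 a (1 - 2 * a) (4 / 3 - a) z₁ = R1 at *
  have goalC : (R0 : ℂ) = ((2 * X * (cc / 2 + √3 / 2 * ss) * R1 : ℝ) : ℂ) := by
    push_cast at key g1 g2 ⊢
    linear_combination key - (-1 / 2 + ((√3 : ℝ) : ℂ) / 2 * Complex.I) * X * R1 * g1
      - (-1 / 2 - ((√3 : ℝ) : ℂ) / 2 * Complex.I) * X * R1 * g2
      - ((√3 : ℝ) : ℂ) * ss * X * R1 * hI
  exact_mod_cast goalC
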